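/- Let ε ∈ (0,1) be a real and let r, l be positive integers with l = r·ε² (so ε is such that r·ε² is an integer). Let v be a binary string such that l divides |v| and r ≤ ε²·|v|, and write v as the concatenation of N = |v|/l blocks v₁, …, v_N each of length l. Set a = adv(v, A_r). If a ≥ 8ε², then the variance of the block biases satisfies (1/N)·∑_{j=1}^{N} (bias(v_j) − bias(v))² ≥ (a − 8ε²)·(a − 5ε²)² / 144. -/

import Mathlib

/-!
Weight the two letters unevenly. Let `β = bias v`; for a suitable tilt `μ ∈ [-1, 1]`, depending only
on `β`, the quantity `3|u| - |w| - |b| - μ (count₁ b - count₀ b)` is nonpositive, for every common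
subsequence `u` of `w` and `b`, as soon as `w` has bias `β` and `b` is constant. It is additive
under concatenation, and on a substring `b` of `A_r` the correction term is at most `r`, because the
runs of `A_r` cancel. So a common subsequence of `v` and `b` earns advantage in a block `v_j` only
through `|bias v_j - β|`, or by matching `v_j` across a boundary between two runs of `A_r`; since
blocks are shorter than runs by a factor `ε²`, the second source contributes `O(ε²)` in total.
Hence `adv(v, A_r) ≤ 7ε² + (3/2) · mean |bias v_j - β|`, and Cauchy-Schwarz bounds the variance.
-/

/-- The length of a longest common subsequence of `x` and `y`. -/
noncomputable def LCS {α : Type*} (x y : List α) : ℕ :=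
  sSup {n | ∃ u : List α, u.Sublist x ∧ u.Sublist y ∧ u.length = n}

/-- The contiguous substring of the infinite alternating binary string `A_r = (0^r 1^r)^∞`
starting at (0-indexed) position `i` and having length `m`. -/
def altSeg (r i m : ℕ) : List Bool :=
  (List.range m).map (fun t => decide (((i + t) / r) % 2 = 1))

/-- Advantage of `a` over `b`: `(3·LCS(a,b) − |a| − |b|) / |a|`. -/
noncomputable def advR (a b : List Bool) : ℝ :=
  (3 * (LCS a b : ℝ) - a.length - b.length) / a.length

/-- Advantage of `a` to the infinite alternating string `A_r`: the supremum of the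
advantage of `a` over all finite contiguous substrings of `A_r`. -/
noncomputable def advInf (a : List Bool) (r : ℕ) : ℝ :=
  sSup {x : ℝ | ∃ i m : ℕ, x = advR a (altSeg r i m)}

/-- The bias of a binary string: `(count₁(w) − count₀(w)) / |w|`. -/
noncomputable def bias (w : List Bool) : ℝ :=
  ((w.count true : ℝ) - (w.count false : ℝ)) / w.length

open List

/-! ### Longest common subsequences -/

theorem exists_sublist_length_eq_LCS {α : Type*} (x y : List α) :
    ∃ u : List α, u <+ x ∧ u <+ y ∧ u.length = LCS x y := by
  refine Nat.sSup_mem (s := {n | ∃ u : List α, u <+ x ∧ u <+ y ∧ u.length = n})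
    ⟨0, [], nil_sublist x, nil_sublist y, rfl⟩ ⟨x.length, ?_⟩
  rintro n ⟨u, hux, -, rfl⟩
  exact hux.length_le

theorem LCS_le_length_left {α : Type*} (x y : List α) : LCS x y ≤ x.length := by
  obtain ⟨u, hux, -, hu⟩ := exists_sublist_length_eq_LCS x y
  exact hu ▸ hux.length_le

theorem advR_le_two (a b : List Bool) : advR a b ≤ 2 := by
  have hLCS : (LCS a b : ℝ) ≤ a.length := by exact_mod_cast LCS_le_length_left a b
  refine div_le_of_le_mul₀ (by positivity) (by norm_num) ?_
  linarith [b.length.cast_nonneg (α := ℝ)]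

theorem advInf_le_two (a : List Bool) (r : ℕ) : advInf a r ≤ 2 := by
  refine Real.sSup_le ?_ (by norm_num)
  rintro _ ⟨i, m, rfl⟩
  exact advR_le_two a _

/-! ### Imbalance and bias -/

/-- The sign of a bit as it enters the bias: `1` counts positively and `0` negatively. -/
def bitSign (c : Bool) : ℝ := if c then 1 else -1

/-- The unnormalized bias `count₁ w - count₀ w`, which is additive under concatenation. -/
def imbalance (w : List Bool) : ℝ := (w.count true : ℝ) - w.count false

theorem imbalance_append (x y : List Bool) :
    imbalance (x ++ y) = imbalance x + imbalance y := by
  simp only [imbalance, count_append, Nat.cast_add]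
  ring

theorem imbalance_replicate (n : ℕ) (c : Bool) :
    imbalance (replicate n c) = n * bitSign c := by
  cases c <;> simp [imbalance, bitSign, count_replicate]

theorem count_add_count_cast (w : List Bool) :
    (w.count true : ℝ) + w.count false = w.length := by
  exact_mod_cast count_true_add_count_false w

theorem two_mul_count (c : Bool) (w : List Bool) :
    2 * (w.count c : ℝ) = w.length + bitSign c * imbalance w := by
  rw [← count_add_count_cast]
  cases c <;> simp only [bitSign, imbalance, Bool.false_eq_true, if_true, if_false] <;> ring

theorem length_mul_bias (w : List Bool) : (w.length : ℝ) * bias w = imbalance w := by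
  rcases eq_or_ne w [] with rfl | hw
  · simp [imbalance]
  · exact mul_div_cancel₀ _ (by simpa using hw)

theorem abs_bias_le_one (w : List Bool) : |bias w| ≤ 1 := by
  rw [bias, abs_div, Nat.abs_cast]
  refine div_le_one_of_le₀ ?_ (by positivity)
  rw [← count_add_count_cast, abs_le]
  constructor <;>
    linarith [(w.count true).cast_nonneg (α := ℝ),
      (w.count false).cast_nonneg (α := ℝ)]

theorem length_add_mul_imbalance_le_of_sublist {μ : ℝ} (hμ : |μ| ≤ 1) {u b : List Bool}
    (hub : u <+ b) : u.length + μ * imbalance u ≤ b.length + μ * imbalance b := by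
  obtain ⟨hμ_lower, hμ_upper⟩ := abs_le.1 hμ
  have weighted_count (x : List Bool) : x.length + μ * imbalance x =
      (1 + μ) * x.count true + (1 - μ) * x.count false := by
    rw [← count_add_count_cast, imbalance]
    ring
  have htrue : (u.count true : ℝ) ≤ b.count true := by exact_mod_cast hub.count_le true
  have hfalse : (u.count false : ℝ) ≤ b.count false := by exact_mod_cast hub.count_le false
  rw [weighted_count, weighted_count]
  gcongr
  all_goals linarith

/-! ### Segments of the alternating string -/

section AltSeg

variable {r : ℕ}

theorem length_altSeg (r i m : ℕ) : (altSeg r i m).length = m := by simp [altSeg]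

theorem altSeg_add (r i p q : ℕ) :
    altSeg r i (p + q) = altSeg r i p ++ altSeg r (i + p) q := by
  simp [altSeg, List.range_add, Function.comp_def, add_assoc]

theorem exists_altSeg_of_eq_append {i m : ℕ} {x y : List Bool} (h : altSeg r i m = x ++ y) :
    ∃ p q, m = p + q ∧ x = altSeg r i p ∧ y = altSeg r (i + p) q := by
  have hm : m = x.length + y.length := by rw [← length_append, ← h, length_altSeg]
  rw [hm, altSeg_add] at h
  obtain ⟨hx, hy⟩ := append_inj h (length_altSeg _ _ _)
  exact ⟨_, _, hm, hx.symm, hy.symm⟩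

theorem altSeg_eq_replicate {i m q : ℕ} (h : ∀ t < m, (i + t) / r = q) :
    altSeg r i m = replicate m (decide (q % 2 = 1)) := by
  rw [eq_replicate_iff, length_altSeg]
  refine ⟨rfl, fun b hb => ?_⟩
  obtain ⟨t, ht, rfl⟩ := mem_map.1 hb
  rw [h t (List.mem_range.1 ht)]

theorem altSeg_mul_eq_replicate {s : ℕ} (hs : s ≤ r) (q : ℕ) :
    altSeg r (q * r) s = replicate s (decide (q % 2 = 1)) := by
  refine altSeg_eq_replicate fun t ht => ?_
  have htr : t < r := ht.trans_le hs
  rw [mul_comm, Nat.mul_add_div (Nat.zero_lt_of_lt htr), Nat.div_eq_of_lt htr, add_zero]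

theorem imbalance_altSeg_zero_mul (r q : ℕ) :
    imbalance (altSeg r 0 (q * r)) = if q % 2 = 1 then -(r : ℝ) else 0 := by
  induction q with
  | zero => simp [altSeg, imbalance]
  | succ q ih =>
    rw [add_mul, one_mul, altSeg_add, imbalance_append, ih, zero_add,
      altSeg_mul_eq_replicate le_rfl, imbalance_replicate, bitSign]
    rcases Nat.mod_two_eq_zero_or_one q with hq | hq <;> simp [hq, Nat.add_mod]

theorem imbalance_altSeg_zero_mem_Icc (hr : 0 < r) (k : ℕ) :
    imbalance (altSeg r 0 k) ∈ Set.Icc (-(r : ℝ)) 0 := by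
  have hs : ((k % r : ℕ) : ℝ) ≤ r := by exact_mod_cast (Nat.mod_lt k hr).le
  rw [← Nat.div_add_mod' k r, altSeg_add, imbalance_append, imbalance_altSeg_zero_mul, zero_add,
    altSeg_mul_eq_replicate (Nat.mod_lt k hr).le, imbalance_replicate, bitSign]
  by_cases hq : k / r % 2 = 1
  · simp only [hq, decide_true, if_true, Set.mem_Icc]
    constructor <;> linarith [(k % r).cast_nonneg (α := ℝ)]
  · simp only [hq, decide_false, if_false, Bool.false_eq_true, Set.mem_Icc]
    constructor <;> linarith [(k % r).cast_nonneg (α := ℝ)]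

theorem abs_imbalance_altSeg_le (hr : 0 < r) (i m : ℕ) : |imbalance (altSeg r i m)| ≤ r := by
  have hsplit := imbalance_append (altSeg r 0 i) (altSeg r (0 + i) m)
  rw [← altSeg_add, zero_add] at hsplit
  obtain ⟨hi_lower, hi_upper⟩ := imbalance_altSeg_zero_mem_Icc hr i
  obtain ⟨him_lower, him_upper⟩ := imbalance_altSeg_zero_mem_Icc hr (i + m)
  rw [abs_le]
  constructor <;> linarith

/-- The number of run boundaries of `A_r` (positive multiples of `r`) in the interval `(i, i + m]`.
A boundary at the right end of a segment is counted although the segment does not cross it; this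
makes the count additive. -/
def runBoundaries (r i m : ℕ) : ℕ := (i + m) / r - i / r

theorem runBoundaries_add (r i p q : ℕ) :
    runBoundaries r i (p + q) = runBoundaries r i p + runBoundaries r (i + p) q := by
  have hp : i / r ≤ (i + p) / r := Nat.div_le_div_right (by omega)
  have hq : (i + p) / r ≤ (i + p + q) / r := Nat.div_le_div_right (by omega)
  simp only [runBoundaries, ← add_assoc]
  omega

theorem runBoundaries_le (hr : 0 < r) (i m : ℕ) : (runBoundaries r i m : ℝ) ≤ m / r + 1 := by
  have hnat : runBoundaries r i m ≤ m / r + 1 := by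
    rw [runBoundaries, Nat.add_div hr, add_assoc, Nat.add_sub_cancel_left]
    gcongr
    split_ifs <;> simp
  calc (runBoundaries r i m : ℝ) ≤ ((m / r : ℕ) : ℝ) + 1 := by exact_mod_cast hnat
    _ ≤ m / r + 1 := by gcongr; exact Nat.cast_div_le

theorem altSeg_eq_replicate_of_runBoundaries_eq_zero {i m : ℕ} (h : runBoundaries r i m = 0) :
    altSeg r i m = replicate m (decide (i / r % 2 = 1)) := by
  refine altSeg_eq_replicate fun t ht => le_antisymm ?_ (Nat.div_le_div_right (by omega))
  calc (i + t) / r ≤ (i + m) / r := Nat.div_le_div_right (by omega)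
    _ ≤ i / r := Nat.sub_eq_zero_iff_le.1 h

end AltSeg

/-! ### The tilted gain -/

/-- The correction coefficient attached to a string of bias `β`. For `β ≥ 0` it is determined by
`(2 - tilt β) * (1 + β) = 2`, and it is extended to `β < 0` as an odd function. -/
noncomputable def tilt (β : ℝ) : ℝ := 2 * β / (1 + |β|)

theorem tilt_neg (β : ℝ) : tilt (-β) = -tilt β := by
  rw [tilt, tilt, abs_neg, mul_neg, neg_div]

theorem abs_tilt_le_one {β : ℝ} (hβ : |β| ≤ 1) : |tilt β| ≤ 1 := by
  have hpos : 0 < 1 + |β| := by positivity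
  rw [tilt, abs_div, abs_of_pos hpos, abs_mul, abs_two, div_le_one hpos]
  linarith

theorem two_sub_tilt_mul_one_add_le (β : ℝ) : (2 - tilt β) * (1 + β) ≤ 2 := by
  have hpos : 0 < 1 + |β| := by positivity
  have htilt : tilt β * (1 + |β|) = 2 * β := div_mul_cancel₀ _ hpos.ne'
  refine le_of_mul_le_mul_right ?_ hpos
  calc (2 - tilt β) * (1 + β) * (1 + |β|) = (2 * (1 + |β|) - tilt β * (1 + |β|)) * (1 + β) := by
        ring
    _ = 2 * (1 + |β|) + 2 * β * (|β| - β) := by rw [htilt]; ring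
    _ ≤ 2 * (1 + |β|) := by
        rcases abs_cases β with ⟨habs, -⟩ | ⟨habs, hneg⟩ <;> rw [habs] <;> nlinarith

theorem two_sub_bitSign_mul_tilt_mul_one_add_le (c : Bool) (β : ℝ) :
    (2 - bitSign c * tilt β) * (1 + bitSign c * β) ≤ 2 := by
  cases c
  · simpa only [bitSign, Bool.false_eq_true, if_false, neg_one_mul, tilt_neg] using
      two_sub_tilt_mul_one_add_le (-β)
  · simpa only [bitSign, if_true, one_mul] using two_sub_tilt_mul_one_add_le β

/-- The unnormalized advantage `3|u| - |w| - |b|` realized by a common subsequence `u` of `w` and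
`b`, corrected by `μ` times the imbalance of `b`. -/
def tiltedGain (μ : ℝ) (u w b : List Bool) : ℝ :=
  3 * u.length - w.length - b.length - μ * imbalance b

theorem tiltedGain_append (μ : ℝ) (u₁ u₂ w₁ w₂ b₁ b₂ : List Bool) :
    tiltedGain μ (u₁ ++ u₂) (w₁ ++ w₂) (b₁ ++ b₂) =
      tiltedGain μ u₁ w₁ b₁ + tiltedGain μ u₂ w₂ b₂ := by
  simp only [tiltedGain, length_append, imbalance_append, Nat.cast_add]
  ring

theorem tiltedGain_le_tiltedGain_self {μ : ℝ} (hμ : |μ| ≤ 1) {u b : List Bool} (w : List Bool)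
    (hub : u <+ b) : tiltedGain μ u w b ≤ tiltedGain μ u w u := by
  have := length_add_mul_imbalance_le_of_sublist hμ hub
  simp only [tiltedGain]
  linarith

theorem tiltedGain_le_two_mul_length {μ : ℝ} (hμ : |μ| ≤ 1) {u w : List Bool} (huw : u <+ w)
    (b : List Bool) : tiltedGain μ u w b ≤ 2 * w.length := by
  have hlen : (u.length : ℝ) ≤ w.length := by exact_mod_cast huw.length_le
  have hpos := length_add_mul_imbalance_le_of_sublist hμ (nil_sublist b)
  simp only [imbalance, count_nil, length_nil, Nat.cast_zero, sub_zero, mul_zero, add_zero] at hpos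
  simp only [tiltedGain, imbalance]
  linarith

theorem tiltedGain_replicate_self_le {β : ℝ} (hβ : |β| ≤ 1) {n : ℕ} {c : Bool} {w : List Bool}
    (h : replicate n c <+ w) :
    tiltedGain (tilt β) (replicate n c) w (replicate n c) ≤ 3 / 2 * w.length * |bias w - β| := by
  set s := bitSign c
  have hs : |s| = 1 := by cases c <;> simp [s, bitSign]
  have hs_tilt : |s * tilt β| ≤ 1 := by
    rw [abs_mul, hs, one_mul]
    exact abs_tilt_le_one hβ
  obtain ⟨hs_tilt_lower, hs_tilt_upper⟩ := abs_le.1 hs_tilt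
  have hcoeff : 0 ≤ 2 - s * tilt β := by linarith
  have hcount : 2 * (n : ℝ) ≤ w.length * (1 + s * bias w) := by
    have hn : (n : ℝ) ≤ w.count c := by exact_mod_cast replicate_sublist_iff.1 h
    linarith [two_mul_count c w, congrArg (s * ·) (length_mul_bias w)]
  have hdeviation : (2 - s * tilt β) * (s * (bias w - β)) ≤ 3 * |bias w - β| := by
    calc (2 - s * tilt β) * (s * (bias w - β)) ≤ (2 - s * tilt β) * |s * (bias w - β)| := by
          gcongr; exact le_abs_self _
      _ = (2 - s * tilt β) * |bias w - β| := by rw [abs_mul, hs, one_mul]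
      _ ≤ 3 * |bias w - β| := by gcongr; linarith
  calc tiltedGain (tilt β) (replicate n c) w (replicate n c)
      = (2 - s * tilt β) * (2 * n) / 2 - w.length := by
        simp only [tiltedGain, length_replicate, imbalance_replicate, s]
        ring
    _ ≤ (2 - s * tilt β) * (w.length * (1 + s * bias w)) / 2 - w.length := by gcongr
    _ = w.length / 2 * ((2 - s * tilt β) * (1 + s * β) - 2
          + (2 - s * tilt β) * (s * (bias w - β))) := by ring
    _ ≤ w.length / 2 * (2 - 2 + 3 * |bias w - β|) := by
        gcongr
        exact two_sub_bitSign_mul_tilt_mul_one_add_le c β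
    _ = 3 / 2 * w.length * |bias w - β| := by ring

theorem tiltedGain_altSeg_le {β : ℝ} (hβ : |β| ≤ 1) {u w : List Bool} {r i m : ℕ} (huw : u <+ w)
    (hub : u <+ altSeg r i m) :
    tiltedGain (tilt β) u w (altSeg r i m) ≤
      3 / 2 * w.length * |bias w - β| + 2 * w.length * runBoundaries r i m := by
  rcases Nat.eq_zero_or_pos (runBoundaries r i m) with h | h
  · have hself := tiltedGain_le_tiltedGain_self (abs_tilt_le_one hβ) w hub
    rw [altSeg_eq_replicate_of_runBoundaries_eq_zero h, sublist_replicate_iff] at hub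
    obtain ⟨n, -, rfl⟩ := hub
    simpa [h] using hself.trans (tiltedGain_replicate_self_le hβ huw)
  · calc tiltedGain (tilt β) u w (altSeg r i m) ≤ 2 * w.length * (1 : ℕ) := by
          simpa using tiltedGain_le_two_mul_length (abs_tilt_le_one hβ) huw _
      _ ≤ 2 * w.length * runBoundaries r i m := by gcongr; exact h
      _ ≤ _ := le_add_of_nonneg_left (by positivity)

theorem tiltedGain_altSeg_le_sum_blocks {β : ℝ} (hβ : |β| ≤ 1) {r l N : ℕ} {u v : List Bool}
    {i m : ℕ} (hv : v.length = N * l) (huv : u <+ v) (hub : u <+ altSeg r i m) :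
    tiltedGain (tilt β) u v (altSeg r i m) ≤
      3 / 2 * l * ∑ j ∈ Finset.range N, |bias ((v.drop (j * l)).take l) - β| +
        2 * l * runBoundaries r i m := by
  induction N generalizing u v i m with
  | zero =>
    obtain rfl : v = [] := by simpa using hv
    refine (tiltedGain_le_two_mul_length (abs_tilt_le_one hβ) huv _).trans ?_
    simp only [length_nil, Nat.cast_zero, Finset.range_zero, Finset.sum_empty, mul_zero, zero_add]
    positivity
  | succ N ih =>
    have htake : (v.take l).length = l := by
      rw [length_take, hv, min_eq_left (Nat.le_mul_of_pos_left l N.succ_pos)]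
    have hdrop : (v.drop l).length = N * l := by
      rw [length_drop, hv, Nat.succ_mul, Nat.add_sub_cancel]
    have hblock (j : ℕ) : v.drop ((j + 1) * l) = (v.drop l).drop (j * l) := by
      rw [drop_drop, add_mul, one_mul, add_comm]
    rw [← take_append_drop l v, sublist_append_iff] at huv
    obtain ⟨u₁, u₂, rfl, hu₁, hu₂⟩ := huv
    obtain ⟨b₁, b₂, hb, hub₁, hub₂⟩ := append_sublist_iff.1 hub
    obtain ⟨p, q, rfl, rfl, rfl⟩ := exists_altSeg_of_eq_append hb
    have hfirst := tiltedGain_altSeg_le hβ hu₁ hub₁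
    have hrest := ih hdrop hu₂ hub₂
    have hgain := tiltedGain_append (tilt β) u₁ u₂ (v.take l) (v.drop l) (altSeg r i p)
      (altSeg r (i + p) q)
    rw [htake] at hfirst
    rw [take_append_drop] at hgain
    rw [Finset.sum_range_succ', altSeg_add, hgain, runBoundaries_add]
    simp only [hblock, zero_mul, drop_zero]
    push_cast
    linarith

/-! ### Advantage and block biases -/

section Blocks

variable {r l : ℕ} {v : List Bool}

theorem three_mul_length_sub_le_sum_blocks (hr : 0 < r) (hdvd : l ∣ v.length) {u : List Bool}
    {i m : ℕ} (huv : u <+ v) (hub : u <+ altSeg r i m) :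
    3 * (u.length : ℝ) - v.length - m ≤
      r + 2 * l * (m / r + 1) +
        3 / 2 * l *
          ∑ j ∈ Finset.range (v.length / l), |bias ((v.drop (j * l)).take l) - bias v| := by
  have hβ := abs_bias_le_one v
  have hgain := tiltedGain_altSeg_le_sum_blocks hβ (Nat.div_mul_cancel hdvd).symm huv hub
  have hcorrection : tilt (bias v) * imbalance (altSeg r i m) ≤ r := by
    calc tilt (bias v) * imbalance (altSeg r i m)
        ≤ |tilt (bias v)| * |imbalance (altSeg r i m)| := by
          rw [← abs_mul]; exact le_abs_self _
      _ ≤ 1 * r := by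
          gcongr
          exacts [abs_tilt_le_one hβ, abs_imbalance_altSeg_le hr i m]
      _ = r := one_mul _
  have hboundaries : 2 * (l : ℝ) * runBoundaries r i m ≤ 2 * l * (m / r + 1) := by
    gcongr
    exact runBoundaries_le hr i m
  rw [tiltedGain, length_altSeg] at hgain
  linarith

theorem advR_altSeg_le_mean_abs_bias_sub {δ : ℝ} (hr : 0 < r) (hδ : δ ≤ 1) (hrl : (l : ℝ) = r * δ)
    (hdvd : l ∣ v.length) (hrv : (r : ℝ) ≤ δ * v.length) (i m : ℕ) :
    advR v (altSeg r i m) ≤ 7 * δ + 3 / 2 *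
      ((∑ j ∈ Finset.range (v.length / l), |bias ((v.drop (j * l)).take l) - bias v|) /
        ((v.length / l : ℕ) : ℝ)) := by
  set S := ∑ j ∈ Finset.range (v.length / l), |bias ((v.drop (j * l)).take l) - bias v|
  have hr_pos : (0 : ℝ) < r := by exact_mod_cast hr
  have hδ_pos : 0 < δ := pos_of_mul_pos_left (hr_pos.trans_le hrv) (by positivity)
  have hv_pos : (0 : ℝ) < v.length := pos_of_mul_pos_right (hr_pos.trans_le hrv) hδ_pos.le
  have hl_pos : (0 : ℝ) < l := hrl ▸ mul_pos hr_pos hδ_pos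
  obtain ⟨u, huv, hub, hu⟩ := exists_sublist_length_eq_LCS v (altSeg r i m)
  rw [advR, ← hu, length_altSeg]
  rcases le_total (3 * (u.length : ℝ) - v.length - m) 0 with hneg | hpos
  · have hS : 0 ≤ S := Finset.sum_nonneg fun _ _ => abs_nonneg _
    have hbound : 0 ≤ 7 * δ + 3 / 2 * (S / ((v.length / l : ℕ) : ℝ)) :=
      add_nonneg (by positivity) (mul_nonneg (by norm_num) (div_nonneg hS (Nat.cast_nonneg _)))
    exact (div_nonpos_of_nonpos_of_nonneg hneg hv_pos.le).trans hbound
  have hm : (m : ℝ) ≤ 2 * v.length := by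
    have hlen : (u.length : ℝ) ≤ v.length := by exact_mod_cast huv.length_le
    linarith
  have hboundaries : 2 * (l : ℝ) * (m / r + 1) ≤ 6 * δ * v.length := by
    calc 2 * (l : ℝ) * (m / r + 1) = 2 * δ * (m + r) := by rw [hrl]; field_simp
      _ ≤ 2 * δ * (2 * v.length + 1 * v.length) := by
          gcongr
          exact hrv.trans (by gcongr)
      _ = 6 * δ * v.length := by ring
  have hmean : S / ((v.length / l : ℕ) : ℝ) * v.length = l * S := by
    rw [Nat.cast_div hdvd hl_pos.ne']
    field_simp
  rw [div_le_iff₀ hv_pos]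
  linarith [three_mul_length_sub_le_sum_blocks hr hdvd huv hub]

theorem advInf_le_mean_abs_bias_sub {δ : ℝ} (hr : 0 < r) (hδ : δ ≤ 1) (hrl : (l : ℝ) = r * δ)
    (hdvd : l ∣ v.length) (hrv : (r : ℝ) ≤ δ * v.length) :
    advInf v r ≤ 7 * δ + 3 / 2 *
      ((∑ j ∈ Finset.range (v.length / l), |bias ((v.drop (j * l)).take l) - bias v|) /
        ((v.length / l : ℕ) : ℝ)) := by
  refine csSup_le ⟨_, 0, 0, rfl⟩ ?_
  rintro _ ⟨i, m, rfl⟩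
  exact advR_altSeg_le_mean_abs_bias_sub hr hδ hrl hdvd hrv i m

theorem stmt13_general {δ : ℝ} (hr : 0 < r) (hrl : (l : ℝ) = r * δ) (hdvd : l ∣ v.length)
    (hrv : (r : ℝ) ≤ δ * v.length) (h7 : 7 * δ ≤ advInf v r) :
    (2 / 3 * (advInf v r - 7 * δ)) ^ 2 ≤
      (1 / ((v.length / l : ℕ) : ℝ)) *
        ∑ j ∈ Finset.range (v.length / l), (bias ((v.drop (j * l)).take l) - bias v) ^ 2 := by
  have hδ : δ ≤ 1 := by linarith [advInf_le_two v r]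
  have hmean := advInf_le_mean_abs_bias_sub hr hδ hrl hdvd hrv
  set mean := (∑ j ∈ Finset.range (v.length / l), |bias ((v.drop (j * l)).take l) - bias v|) /
    ((v.length / l : ℕ) : ℝ) with mean_def
  have hmean_sq : mean ^ 2 ≤ (1 / ((v.length / l : ℕ) : ℝ)) *
      ∑ j ∈ Finset.range (v.length / l), (bias ((v.drop (j * l)).take l) - bias v) ^ 2 := by
    have hjensen := sum_div_card_sq_le_sum_sq_div_card (s := Finset.range (v.length / l))
      (f := fun j => |bias ((v.drop (j * l)).take l) - bias v|)
    simpa only [mean_def, Finset.card_range, sq_abs, one_div_mul_eq_div] using hjensen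
  calc (2 / 3 * (advInf v r - 7 * δ)) ^ 2 ≤ mean ^ 2 := by
        gcongr
        linarith
    _ ≤ _ := hmean_sq

end Blocks

theorem cubic_le_quadratic_of_le_two {x δ : ℝ} (hδ : 0 ≤ δ) (hx : x ≤ 2) (h8 : 8 * δ ≤ x) :
    (x - 8 * δ) * (x - 5 * δ) ^ 2 / 144 ≤ (2 / 3 * (x - 7 * δ)) ^ 2 := by
  have hsq : (x - 5 * δ) ^ 2 ≤ (3 * (x - 7 * δ)) ^ 2 :=
    pow_le_pow_left₀ (by linarith) (by linarith) 2
  calc (x - 8 * δ) * (x - 5 * δ) ^ 2 / 144 ≤ 2 * (3 * (x - 7 * δ)) ^ 2 / 144 := by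
        gcongr
        linarith
    _ ≤ (2 / 3 * (x - 7 * δ)) ^ 2 := by linarith [sq_nonneg (x - 7 * δ)]

theorem stmt13 (ε : ℝ) (hε : ε ∈ Set.Ioo (0 : ℝ) 1) (r l : ℕ) (hr : 0 < r) (hl : 0 < l)
    (hrl : (l : ℝ) = r * ε ^ 2) (v : List Bool) (hdvd : l ∣ v.length)
    (hrv : (r : ℝ) ≤ ε ^ 2 * v.length)
    (a : ℝ) (ha : a = advInf v r) (h8 : 8 * ε ^ 2 ≤ a) :
    (a - 8 * ε ^ 2) * (a - 5 * ε ^ 2) ^ 2 / 144 ≤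
      (1 / ((v.length / l : ℕ) : ℝ)) *
        ∑ j ∈ Finset.range (v.length / l), (bias ((v.drop (j * l)).take l) - bias v) ^ 2 := by
  subst ha
  have h7 : 7 * ε ^ 2 ≤ advInf v r := by linarith [sq_nonneg ε]
  exact (cubic_le_quadratic_of_le_two (sq_nonneg ε) (advInf_le_two v r) h8).trans
    (stmt13_general hr hrl hdvd hrv h7)
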